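/- Let S₁, S₂, S₃, S₄ be continuous semilattices with zero, L a completely distributive lattice with a unital quantale structure *, and let R ⊆ S₁ × S₂ × L, Q ⊆ S₂ × S₃ × L, T ⊆ S₃ × S₄ × L be pseudo-invertible L-ambiguous representations (each satisfying: whenever (x,y,α) belongs to the relation, y' ≪ y, and α' ≪ α, there exists x' ≪ x with (x',y',α') in the relation). Then the composition ⊛ is associative: (R ⊛ Q) ⊛ T = R ⊛ (Q ⊛ T); moreover, (x,t,α) belongs to either side iff for all α' ≪ α and t' ≪ t there exist n ∈ ℕ, y₁,…,yₙ ∈ S₂, z₁,…,zₙ ∈ S₃ and β₁,γ₁,δ₁,…,βₙ,γₙ,δₙ ∈ L with (x,yᵢ,βᵢ) ∈ R, (yᵢ,zᵢ,γᵢ) ∈ Q, (zᵢ,t',δᵢ) ∈ T for each i, and β₁*γ₁*δ₁ ∨ … ∨ βₙ*γₙ*δₙ ≥ α'. -/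

import Mathlib

/-- A dcpo: every nonempty directed subset has a least upper bound. -/
def IsDcpo (α : Type*) [PartialOrder α] : Prop :=
  ∀ D : Set α, D.Nonempty → DirectedOn (· ≤ ·) D → ∃ a : α, IsLUB D a

/-- Scott closed: a lower set closed under suprema of its (nonempty) directed subsets. -/
def ScottClosed {α : Type*} [PartialOrder α] (A : Set α) : Prop :=
  IsLowerSet A ∧
    ∀ D : Set α, D ⊆ A → D.Nonempty → DirectedOn (· ≤ ·) D → ∀ a : α, IsLUB D a → a ∈ A

/-- Scott closure: the least Scott closed set containing `A`. -/
def scottClosure {α : Type*} [PartialOrder α] (A : Set α) : Set α :=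
  ⋂₀ {C : Set α | ScottClosed C ∧ A ⊆ C}

/-- `x` is way below `y`. -/
def WayBelow {α : Type*} [PartialOrder α] (x y : α) : Prop :=
  ∀ D : Set α, D.Nonempty → DirectedOn (· ≤ ·) D → ∀ a : α, IsLUB D a → y ≤ a → ∃ d ∈ D, x ≤ d

/-- A continuous (meet-)semilattice with zero: a dcpo meet-semilattice with bottom in which
every element is the directed supremum of the elements way below it. -/
def IsContinuousSemilattice (α : Type*) [SemilatticeInf α] [OrderBot α] : Prop :=
  IsDcpo α ∧
    ∀ y : α, DirectedOn (· ≤ ·) {x : α | WayBelow x y} ∧ IsLUB {x : α | WayBelow x y} y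

/-- A compatibility `P : S × S' → {0,1}` (encoded with `Prop` as the two-element lattice,
`P x y` meaning `P(x,y) = 1`): it preserves binary meets in each variable separately,
sends pairs containing a bottom element to `0`, and is Scott continuous (preserves
suprema of nonempty directed subsets of the product). -/
def IsCompatibility {S S' : Type*} [SemilatticeInf S] [OrderBot S]
    [SemilatticeInf S'] [OrderBot S'] (P : S → S' → Prop) : Prop :=
  (∀ x₁ x₂ y, P (x₁ ⊓ x₂) y ↔ P x₁ y ∧ P x₂ y) ∧
  (∀ x y₁ y₂, P x (y₁ ⊓ y₂) ↔ P x y₁ ∧ P x y₂) ∧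
  (∀ y, ¬ P ⊥ y) ∧ (∀ x, ¬ P x ⊥) ∧
  (∀ D : Set (S × S'), D.Nonempty → DirectedOn (· ≤ ·) D → ∀ a : S × S', IsLUB D a →
    (P a.1 a.2 ↔ ∃ p ∈ D, P p.1 p.2))

/-- A separating compatibility. -/
def IsSeparatingCompatibility {S S' : Type*} [SemilatticeInf S] [OrderBot S]
    [SemilatticeInf S'] [OrderBot S'] (P : S → S' → Prop) : Prop :=
  IsCompatibility P ∧
  (∀ x₁ x₂ : S, (∀ y, P x₁ y ↔ P x₂ y) → x₁ = x₂) ∧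
  (∀ y₁ y₂ : S', (∀ x, P x y₁ ↔ P x y₂) → y₁ = y₂)

/-- Transversal of `A ⊆ S` w.r.t. a compatibility `P : S × S' → {0,1}`:
all `y ∈ S'` with `P(x,y) = 0` for every `x ∈ A`. -/
def transversal {S S' : Type*} (P : S → S' → Prop) (A : Set S) : Set S' :=
  {y : S' | ∀ x ∈ A, ¬ P x y}

/-- A (crisp) ambiguous representation of `S₁` in `S₂`. -/
def AmbRep {S₁ S₂ : Type*} [PartialOrder S₁] [PartialOrder S₂] (R : Set (S₁ × S₂)) : Prop :=
  (∀ x : S₁, ({y : S₂ | (x, y) ∈ R}).Nonempty ∧ ScottClosed {y : S₂ | (x, y) ∈ R}) ∧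
  (∀ y : S₂, IsUpperSet {x : S₁ | (x, y) ∈ R})

/-- The pseudo-inverse of a relation `R ⊆ S₁ × S₂` w.r.t. compatibilities
`P₁ : S₁ × T₁ → {0,1}` and `P₂ : S₂ × T₂ → {0,1}`. -/
def psInv {S₁ S₂ T₁ T₂ : Type*} (P₁ : S₁ → T₁ → Prop) (P₂ : S₂ → T₂ → Prop)
    (R : Set (S₁ × S₂)) : Set (T₂ × T₁) :=
  {p : T₂ × T₁ | ∀ x : S₁, P₁ x p.2 → ∃ y : S₂, (x, y) ∈ R ∧ P₂ y p.1}

/-- Composition `R ; Q` of ambiguous representations. -/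
def ambComp {S₁ S₂ S₃ : Type*} [PartialOrder S₃]
    (R : Set (S₁ × S₂)) (Q : Set (S₂ × S₃)) : Set (S₁ × S₃) :=
  {p : S₁ × S₃ | ∀ z' : S₃, WayBelow z' p.2 → ∃ y : S₂, (p.1, y) ∈ R ∧ (y, z') ∈ Q}

/-- Pseudo-invertibility condition (c). -/
def PseudoInvertible {S₁ S₂ : Type*} [PartialOrder S₁] [PartialOrder S₂]
    (R : Set (S₁ × S₂)) : Prop :=
  ∀ x y, (x, y) ∈ R → ∀ y', WayBelow y' y → ∃ x', WayBelow x' x ∧ (x', y') ∈ R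

/-- An `L`-fuzzy ambiguous representation of `S₁` in `S₂`. -/
def LAmbRep {S₁ S₂ L : Type*} [PartialOrder S₁] [PartialOrder S₂] [PartialOrder L]
    (R : Set (S₁ × S₂ × L)) : Prop :=
  (∀ (y : S₂) (α : L), IsUpperSet {x : S₁ | (x, y, α) ∈ R}) ∧
  (∀ (x : S₁) (α : L),
    ({y : S₂ | (x, y, α) ∈ R}).Nonempty ∧ ScottClosed {y : S₂ | (x, y, α) ∈ R}) ∧
  (∀ (x : S₁) (y : S₂), ({α : L | (x, y, α) ∈ R}).Nonempty ∧
    DirectedOn (· ≤ ·) {α : L | (x, y, α) ∈ R} ∧ ScottClosed {α : L | (x, y, α) ∈ R})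

/-- The `α`-cut of an `L`-fuzzy relation. -/
def lCut {S₁ S₂ L : Type*} (R : Set (S₁ × S₂ × L)) (α : L) : Set (S₁ × S₂) :=
  {p : S₁ × S₂ | (p.1, p.2, α) ∈ R}

/-- The pseudo-inverse of an `L`-fuzzy ambiguous representation, given through its
`α`-cuts: `(R⊤)_α = ⋂_{β ≪ α} (R_β)⊤`. -/
def lpsInv {S₁ S₂ T₁ T₂ L : Type*} [PartialOrder L]
    (P₁ : S₁ → T₁ → Prop) (P₂ : S₂ → T₂ → Prop) (R : Set (S₁ × S₂ × L)) :
    Set (T₂ × T₁ × L) :=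
  {p : T₂ × T₁ × L | ∀ β : L, WayBelow β p.2.2 → (p.1, p.2.1) ∈ psInv P₁ P₂ (lCut R β)}

/-- Pseudo-invertibility condition (d) for `L`-fuzzy ambiguous representations. -/
def LPseudoInvertible {S₁ S₂ L : Type*} [PartialOrder S₁] [PartialOrder S₂] [PartialOrder L]
    (R : Set (S₁ × S₂ × L)) : Prop :=
  ∀ x y α, (x, y, α) ∈ R → ∀ y', WayBelow y' y → ∀ α', WayBelow α' α →
    ∃ x', WayBelow x' x ∧ (x', y', α') ∈ R

/-- A unital quantale structure on a complete lattice: an associative multiplication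
distributing over arbitrary suprema in each variable, with the top element as two-sided
unit. -/
def IsQuantaleMul {L : Type*} [CompleteLattice L] (mul : L → L → L) : Prop :=
  (∀ a b c, mul (mul a b) c = mul a (mul b c)) ∧
  (∀ (s : Set L) (b : L), mul (sSup s) b = ⨆ a ∈ s, mul a b) ∧
  (∀ (a : L) (s : Set L), mul a (sSup s) = ⨆ b ∈ s, mul a b) ∧
  (∀ a, mul ⊤ a = a) ∧ (∀ a, mul a ⊤ = a)

/-- Composition `R ⊛ Q` of `L`-fuzzy ambiguous representations w.r.t. a quantale
multiplication `mul` on `L`. -/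
def lComp {S₁ S₂ S₃ L : Type*} [PartialOrder S₃] [CompleteLattice L] (mul : L → L → L)
    (R : Set (S₁ × S₂ × L)) (Q : Set (S₂ × S₃ × L)) : Set (S₁ × S₃ × L) :=
  {p : S₁ × S₃ × L | ∀ z' : S₃, WayBelow z' p.2.1 → ∀ α' : L, WayBelow α' p.2.2 →
    ∃ (n : ℕ) (y : Fin n → S₂) (β γ : Fin n → L),
      (∀ i, (p.1, y i, β i) ∈ R ∧ (y i, z', γ i) ∈ Q) ∧ α' ≤ ⨆ i, mul (β i) (γ i)}

/-!
Replace an `L`-ambiguous representation `R` by the `L`-valued relation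
`supGrade R x y = sup {α | (x, y, α) ∈ R}`. Since `L` is continuous, the finite joins in the
definition of `⊛` are exactly the approximations of a supremum, so `R ⊛ Q` is obtained from the
sup-`*` composition of these relations by taking at `z` the infimum over all `z' ≪ z`. The
sup-`*` composition is associative because `L` is a quantale, so it only remains to see that the
inner infimum in `(R ⊛ Q) ⊛ T` and in `R ⊛ (Q ⊛ T)` is absorbed by the outer one. On the right this
is interpolation of `≪`. On the left, pseudo-invertibility of `T` also lets one replace the
intermediate point `z` by points `z' ≪ z`, which the infimum at `z` takes into account.
-/

section WayBelow

variable {α : Type*} [PartialOrder α]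

theorem WayBelow.le {x y : α} (h : WayBelow x y) : x ≤ y := by
  obtain ⟨d, rfl, hd⟩ := h {y} (Set.singleton_nonempty y) (directedOn_singleton y) y
    isLUB_singleton le_rfl
  exact hd

theorem WayBelow.trans_le {x y z : α} (h : WayBelow x y) (hyz : y ≤ z) : WayBelow x z :=
  fun D hD hdir a ha hza => h D hD hdir a ha (hyz.trans hza)

theorem WayBelow.of_le_of_wayBelow {x y z : α} (hxy : x ≤ y) (h : WayBelow y z) :
    WayBelow x z :=
  fun D hD hdir a ha hza => (h D hD hdir a ha hza).imp fun _ hd => ⟨hd.1, hxy.trans hd.2⟩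

theorem WayBelow.bot_left {β : Type*} [PartialOrder β] [OrderBot β] (y : β) : WayBelow ⊥ y :=
  fun _ hD _ _ _ _ => hD.imp fun _ hd => ⟨hd, bot_le⟩

theorem WayBelow.sup {β : Type*} [SemilatticeSup β] {x y z : β} (hx : WayBelow x z)
    (hy : WayBelow y z) : WayBelow (x ⊔ y) z := by
  intro D hD hdir a ha hza
  obtain ⟨d, hd, hxd⟩ := hx D hD hdir a ha hza
  obtain ⟨e, he, hye⟩ := hy D hD hdir a ha hza
  obtain ⟨u, hu, hdu, heu⟩ := hdir d hd e he
  exact ⟨u, hu, sup_le (hxd.trans hdu) (hye.trans heu)⟩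

theorem WayBelow.exists_le_iSup_fin {L ι : Type*} [CompleteLattice L] {f : ι → L} {b : L}
    (hb : WayBelow b (⨆ i, f i)) : ∃ (n : ℕ) (c : Fin n → ι), b ≤ ⨆ k, f (c k) := by
  have hdir : DirectedOn (· ≤ ·) (Set.range fun s : Finset ι => s.sup f) :=
    directedOn_range.2 (Monotone.directed_le fun _ _ hst => Finset.sup_mono hst)
  have hsup : ⨆ i, f i = ⨆ s : Finset ι, s.sup f := by
    simp only [iSup_eq_iSup_finset f, Finset.sup_eq_iSup]
  obtain ⟨_, ⟨s, rfl⟩, hbs⟩ := hb _ (Set.range_nonempty _) hdir _ isLUB_iSup hsup.le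
  refine ⟨s.card, fun k => s.equivFin.symm k, hbs.trans (Finset.sup_le fun i hi => ?_)⟩
  exact le_iSup_of_le (s.equivFin ⟨i, hi⟩) (by simp only [Equiv.symm_apply_apply, le_refl])

end WayBelow

/-- A continuous poset: every element is the directed supremum of the elements way below it.
Unlike in `IsContinuousSemilattice`, neither meets, nor a bottom, nor further directed suprema are
required, so that the notion also covers the lattice `L` of grades. -/
def IsContinuousPoset (α : Type*) [PartialOrder α] : Prop :=
  ∀ y : α, {x | WayBelow x y}.Nonempty ∧ DirectedOn (· ≤ ·) {x | WayBelow x y} ∧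
    IsLUB {x | WayBelow x y} y

theorem IsContinuousSemilattice.isContinuousPoset {S : Type*} [SemilatticeInf S] [OrderBot S]
    (h : IsContinuousSemilattice S) : IsContinuousPoset S :=
  fun y => ⟨⟨⊥, .bot_left y⟩, h.2 y⟩

-- A choice of one element from each directed set whose supremum is above `a` has its infimum way
-- below `a`.
theorem le_sSup_wayBelow {L : Type*} [CompletelyDistribLattice L] (a : L) :
    a ≤ sSup {b | WayBelow b a} := by
  let I := {D : Set L // D.Nonempty ∧ DirectedOn (· ≤ ·) D ∧ a ≤ sSup D}
  calc
    a ≤ ⨅ D : I, ⨆ d : D.1, (d : L) := le_iInf fun D => by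
      rw [← sSup_eq_iSup']
      exact D.2.2.2
    _ = ⨆ g : (D : I) → D.1, ⨅ D : I, (g D : L) := iInf_iSup_eq
    _ ≤ sSup {b | WayBelow b a} := iSup_le fun g => le_sSup fun D hD hdir c hc hac => by
      let E : I := ⟨D, hD, hdir, hac.trans_eq hc.sSup_eq.symm⟩
      exact ⟨g E, (g E).2, iInf_le (fun D : I => (g D : L)) E⟩

theorem isContinuousPoset_of_completelyDistribLattice (L : Type*) [CompletelyDistribLattice L] :
    IsContinuousPoset L :=
  fun a => ⟨⟨⊥, .bot_left a⟩, fun b hb c hc => ⟨b ⊔ c, hb.sup hc, le_sup_left, le_sup_right⟩,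
    fun _ hb => hb.le, fun _ hu => (le_sSup_wayBelow a).trans (sSup_le hu)⟩

namespace IsContinuousPoset

theorem exists_wayBelow_wayBelow {α : Type*} [PartialOrder α] (h : IsContinuousPoset α) {x z : α}
    (hxz : WayBelow x z) : ∃ y, WayBelow x y ∧ WayBelow y z := by
  let D := {d | ∃ y, WayBelow d y ∧ WayBelow y z}
  have hD : D.Nonempty := by
    obtain ⟨y, hyz⟩ := (h z).1
    obtain ⟨d, hdy⟩ := (h y).1
    exact ⟨d, y, hdy, hyz⟩
  have hdir : DirectedOn (· ≤ ·) D := by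
    rintro d₁ ⟨y₁, hd₁, hy₁⟩ d₂ ⟨y₂, hd₂, hy₂⟩
    obtain ⟨y, hy, h₁, h₂⟩ := (h z).2.1 y₁ hy₁ y₂ hy₂
    obtain ⟨d, hd, h₃, h₄⟩ := (h y).2.1 d₁ (hd₁.trans_le h₁) d₂ (hd₂.trans_le h₂)
    exact ⟨d, ⟨y, hd, hy⟩, h₃, h₄⟩
  have hlub : IsLUB D z :=
    ⟨fun d ⟨y, hdy, hyz⟩ => hdy.le.trans hyz.le, fun b hb =>
      (h z).2.2.2 fun y hyz => (h y).2.2.2 fun d hdy => hb ⟨y, hdy, hyz⟩⟩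
  obtain ⟨d, ⟨y, hdy, hyz⟩, hxd⟩ := hxz D hD hdir z hlub le_rfl
  exact ⟨y, .of_le_of_wayBelow hxd hdy, hyz⟩

theorem le_iff_forall_wayBelow {α : Type*} [PartialOrder α] (h : IsContinuousPoset α) {a b : α} :
    a ≤ b ↔ ∀ c, WayBelow c a → c ≤ b :=
  ⟨fun hab _ hc => hc.le.trans hab, fun hb => (h a).2.2.2 hb⟩

theorem le_iSup_iff {L ι : Type*} [CompleteLattice L] (hL : IsContinuousPoset L) {f : ι → L}
    {a : L} :
    a ≤ ⨆ i, f i ↔ ∀ b, WayBelow b a → ∃ (n : ℕ) (c : Fin n → ι), b ≤ ⨆ k, f (c k) := by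
  refine ⟨fun ha b hb => (hb.trans_le ha).exists_le_iSup_fin, fun h => ?_⟩
  refine hL.le_iff_forall_wayBelow.2 fun b hb => ?_
  obtain ⟨n, c, hbc⟩ := h b hb
  exact hbc.trans (iSup_comp_le f c)

end IsContinuousPoset

section Quantale

-- `Quantale.mul_iSup_distrib` and `Quantale.iSup_mul_distrib` exclude suprema indexed by proofs.
variable {L : Type*} {ι : Sort*} [CompleteLattice L] [Semigroup L] [IsQuantale L]

theorem mul_iSup_sort_distrib (a : L) (f : ι → L) : a * ⨆ i, f i = ⨆ i, a * f i := by
  rw [iSup, mul_sSup_distrib, iSup_range]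

theorem iSup_sort_mul_distrib (f : ι → L) (a : L) : (⨆ i, f i) * a = ⨆ i, f i * a := by
  rw [iSup, sSup_mul_distrib, iSup_range]

end Quantale

/-- The sup-`*` composition of `L`-valued relations. -/
def fuzzyComp {A B C L : Type*} [CompleteLattice L] [Mul L] (f : A → B → L) (g : B → C → L) :
    A → C → L :=
  fun x z => ⨆ y, f x y * g y z

local infixl:70 " ⊚ " => fuzzyComp

/-- The `L`-valued relation whose value at `(x, z)` is the infimum of the values of `f` at `(x, z')`
with `z'` way below `z`. It models the clause "for all `z' ≪ z`" in the definition of `⊛`. -/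
def wayBelowInf {A B L : Type*} [PartialOrder B] [CompleteLattice L] (f : A → B → L) :
    A → B → L :=
  fun x z => ⨅ (z') (_ : WayBelow z' z), f x z'

section FuzzyComp

variable {A B C D L : Type*} [CompleteLattice L] [Semigroup L] [IsQuantale L]

theorem fuzzyComp_assoc (f : A → B → L) (g : B → C → L) (h : C → D → L) :
    f ⊚ g ⊚ h = f ⊚ (g ⊚ h) := by
  ext x t
  simp only [fuzzyComp, iSup_sort_mul_distrib, mul_iSup_sort_distrib, mul_assoc]
  exact iSup_comm

theorem fuzzyComp_mono {f f' : A → B → L} {g g' : B → C → L} (hf : f ≤ f') (hg : g ≤ g') :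
    f ⊚ g ≤ f' ⊚ g' :=
  fun x z => iSup_mono fun y => mul_le_mul' (hf x y) (hg y z)

theorem antitone_fuzzyComp [Preorder C] (f : A → B → L) {g : B → C → L}
    (hg : ∀ y, Antitone (g y)) (x : A) : Antitone ((f ⊚ g) x) :=
  fun _ _ h => iSup_mono fun y => mul_le_mul_right (hg y h) (f x y)

end FuzzyComp

section WayBelowInf

variable {A B L : Type*} [PartialOrder B] [CompleteLattice L]

theorem wayBelowInf_apply_le (f : A → B → L) (x : A) {z' z : B} (h : WayBelow z' z) :
    wayBelowInf f x z ≤ f x z' :=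
  iInf₂_le z' h

theorem wayBelowInf_mono {f g : A → B → L} (h : f ≤ g) : wayBelowInf f ≤ wayBelowInf g :=
  fun x _ => iInf₂_mono fun z' _ => h x z'

theorem le_wayBelowInf {f : A → B → L} (hf : ∀ x, Antitone (f x)) : f ≤ wayBelowInf f :=
  fun x _ => le_iInf₂ fun _ h => hf x h.le

theorem wayBelowInf_wayBelowInf_le (hB : IsContinuousPoset B) (f : A → B → L) :
    wayBelowInf (wayBelowInf f) ≤ wayBelowInf f := by
  refine fun x z => le_iInf₂ fun z' hz' => ?_
  obtain ⟨w, hz'w, hwz⟩ := hB.exists_wayBelow_wayBelow hz'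
  exact (wayBelowInf_apply_le _ x hwz).trans (wayBelowInf_apply_le f x hz'w)

theorem wayBelowInf_eq_of_le_of_le (hB : IsContinuousPoset B) {f g : A → B → L} (hfg : f ≤ g)
    (hgf : g ≤ wayBelowInf f) : wayBelowInf g = wayBelowInf f :=
  ((wayBelowInf_mono hgf).trans (wayBelowInf_wayBelowInf_le hB f)).antisymm (wayBelowInf_mono hfg)

end WayBelowInf

section FuzzyCompWayBelowInf

variable {A B C L : Type*} [PartialOrder C] [CompleteLattice L] [Semigroup L] [IsQuantale L]

theorem wayBelowInf_fuzzyComp_wayBelowInf_left [PartialOrder B] (hC : IsContinuousPoset C)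
    {f : A → B → L} {g : B → C → L} (hf : ∀ x, Antitone (f x))
    (hg : ∀ z t t', WayBelow t' t → g z t ≤ ⨆ (z') (_ : WayBelow z' z), g z' t') :
    wayBelowInf (wayBelowInf f ⊚ g) = wayBelowInf (f ⊚ g) := by
  refine wayBelowInf_eq_of_le_of_le hC (fuzzyComp_mono (le_wayBelowInf hf) le_rfl) ?_
  refine fun x t => le_iInf₂ fun t' ht' => iSup_le fun z => ?_
  calc
    wayBelowInf f x z * g z t
      ≤ wayBelowInf f x z * ⨆ (z') (_ : WayBelow z' z), g z' t' :=
        mul_le_mul_right (hg z t t' ht') _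
    _ = ⨆ (z') (_ : WayBelow z' z), wayBelowInf f x z * g z' t' := by
        simp only [mul_iSup_sort_distrib]
    _ ≤ (f ⊚ g) x t' := iSup₂_le fun z' hz' =>
        le_iSup_of_le z' (mul_le_mul_left (wayBelowInf_apply_le f x hz') _)

theorem wayBelowInf_fuzzyComp_wayBelowInf_right (hC : IsContinuousPoset C) (f : A → B → L)
    {g : B → C → L} (hg : ∀ y, Antitone (g y)) :
    wayBelowInf (f ⊚ wayBelowInf g) = wayBelowInf (f ⊚ g) :=
  wayBelowInf_eq_of_le_of_le hC (fuzzyComp_mono le_rfl (le_wayBelowInf hg)) fun x _ =>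
    le_iInf₂ fun _ ht' => iSup_mono fun y => mul_le_mul_right (wayBelowInf_apply_le g y ht') (f x y)

end FuzzyCompWayBelowInf

/-- The `L`-valued relation underlying `R ⊆ A × B × L`: its value at `(x, y)` is the supremum of
all `α` with `(x, y, α) ∈ R`. -/
def supGrade {A B L : Type*} [CompleteLattice L] (R : Set (A × B × L)) : A → B → L :=
  fun x y => sSup {α | (x, y, α) ∈ R}

section Grade

variable {A B L : Type*} [CompleteLattice L] {R : Set (A × B × L)}

theorem antitone_supGrade [Preorder B] (hR : ∀ x α, IsLowerSet {y | (x, y, α) ∈ R}) (x : A) :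
    Antitone (supGrade R x) :=
  fun _ _ hyy' => sSup_le_sSup fun α hα => hR x α hyy' hα

theorem LPseudoInvertible.supGrade_le_iSup_supGrade [PartialOrder A] [PartialOrder B]
    (hR : LPseudoInvertible R) (hL : IsContinuousPoset L) (x : A) (y y' : B)
    (hy : WayBelow y' y) : supGrade R x y ≤ ⨆ (x') (_ : WayBelow x' x), supGrade R x' y' := by
  refine sSup_le fun α hα => hL.le_iff_forall_wayBelow.2 fun α' hα' => ?_
  obtain ⟨x', hx', hα'⟩ := hR x y α hα y' hy α' hα'
  exact le_iSup₂_of_le x' hx' (le_sSup hα')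

end Grade

section LComp

variable {A B C D L : Type*} [CompleteLattice L] [Semigroup L] [IsQuantale L]
  {R : Set (A × B × L)} {Q : Set (B × C × L)} {T : Set (C × D × L)}

theorem fuzzyComp_supGrade_eq_iSup (x : A) (z : C) :
    (supGrade R ⊚ supGrade Q) x z =
      ⨆ p : {p : B × L × L // (x, p.1, p.2.1) ∈ R ∧ (p.1, z, p.2.2) ∈ Q}, p.1.2.1 * p.1.2.2 := by
  refine eq_of_forall_ge_iff fun c => ?_
  simp only [fuzzyComp, supGrade, sSup_mul_distrib, mul_sSup_distrib, iSup_le_iff,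
    Set.mem_ofPred_eq, Subtype.forall, Prod.forall]
  grind

theorem fuzzyComp_fuzzyComp_supGrade_eq_iSup (x : A) (t : D) :
    (supGrade R ⊚ supGrade Q ⊚ supGrade T) x t =
      ⨆ p : {p : B × C × L × L × L //
        (x, p.1, p.2.2.1) ∈ R ∧ (p.1, p.2.1, p.2.2.2.1) ∈ Q ∧ (p.2.1, t, p.2.2.2.2) ∈ T},
        p.1.2.2.1 * p.1.2.2.2.1 * p.1.2.2.2.2 := by
  refine eq_of_forall_ge_iff fun c => ?_
  simp only [fuzzyComp, supGrade, iSup_sort_mul_distrib, sSup_mul_distrib, mul_sSup_distrib,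
    iSup_le_iff, Set.mem_ofPred_eq, Subtype.forall, Prod.forall]
  grind

theorem le_fuzzyComp_supGrade_iff (hL : IsContinuousPoset L) {x : A} {z : C} {α : L} :
    α ≤ (supGrade R ⊚ supGrade Q) x z ↔ ∀ α', WayBelow α' α →
      ∃ (n : ℕ) (y : Fin n → B) (β γ : Fin n → L),
        (∀ i, (x, y i, β i) ∈ R ∧ (y i, z, γ i) ∈ Q) ∧ α' ≤ ⨆ i, β i * γ i := by
  rw [fuzzyComp_supGrade_eq_iSup, hL.le_iSup_iff]
  refine forall₂_congr fun α' _ => exists_congr fun n => ⟨?_, ?_⟩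
  · rintro ⟨p, hp⟩
    exact ⟨fun i => (p i).1.1, fun i => (p i).1.2.1, fun i => (p i).1.2.2, fun i => (p i).2, hp⟩
  · rintro ⟨y, β, γ, hmem, hle⟩
    exact ⟨fun i => ⟨(y i, β i, γ i), hmem i⟩, hle⟩

theorem le_fuzzyComp_fuzzyComp_supGrade_iff (hL : IsContinuousPoset L) {x : A} {t : D} {α : L} :
    α ≤ (supGrade R ⊚ supGrade Q ⊚ supGrade T) x t ↔ ∀ α', WayBelow α' α →
      ∃ (n : ℕ) (y : Fin n → B) (z : Fin n → C) (β γ δ : Fin n → L),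
        (∀ i, (x, y i, β i) ∈ R ∧ (y i, z i, γ i) ∈ Q ∧ (z i, t, δ i) ∈ T) ∧
        α' ≤ ⨆ i, β i * γ i * δ i := by
  rw [fuzzyComp_fuzzyComp_supGrade_eq_iSup, hL.le_iSup_iff]
  refine forall₂_congr fun α' _ => exists_congr fun n => ⟨?_, ?_⟩
  · rintro ⟨p, hp⟩
    exact ⟨fun i => (p i).1.1, fun i => (p i).1.2.1, fun i => (p i).1.2.2.1,
      fun i => (p i).1.2.2.2.1, fun i => (p i).1.2.2.2.2, fun i => (p i).2, hp⟩
  · rintro ⟨y, z, β, γ, δ, hmem, hle⟩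
    exact ⟨fun i => ⟨(y i, z i, β i, γ i, δ i), hmem i⟩, hle⟩

theorem mem_lComp_iff [PartialOrder C] (hL : IsContinuousPoset L) {x : A} {z : C} {α : L} :
    (x, z, α) ∈ lComp (· * ·) R Q ↔ α ≤ wayBelowInf (supGrade R ⊚ supGrade Q) x z := by
  simp only [wayBelowInf, le_iInf_iff, le_fuzzyComp_supGrade_iff hL]
  rfl

theorem supGrade_lComp [PartialOrder C] (hL : IsContinuousPoset L) :
    supGrade (lComp (· * ·) R Q) = wayBelowInf (supGrade R ⊚ supGrade Q) := by
  ext x z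
  simp only [supGrade, mem_lComp_iff hL]
  exact isLUB_Iic.sSup_eq

theorem mem_lComp_lComp_left_iff [PartialOrder C] [PartialOrder D] (hL : IsContinuousPoset L)
    (hD : IsContinuousPoset D) (hQ : ∀ y γ, IsLowerSet {z | (y, z, γ) ∈ Q})
    (hT : LPseudoInvertible T) {x : A} {t : D} {α : L} :
    (x, t, α) ∈ lComp (· * ·) (lComp (· * ·) R Q) T ↔
      α ≤ wayBelowInf (supGrade R ⊚ supGrade Q ⊚ supGrade T) x t := by
  rw [mem_lComp_iff hL, supGrade_lComp hL, wayBelowInf_fuzzyComp_wayBelowInf_left hD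
    (antitone_fuzzyComp _ (antitone_supGrade hQ)) (hT.supGrade_le_iSup_supGrade hL)]

theorem mem_lComp_lComp_right_iff [PartialOrder D] (hL : IsContinuousPoset L)
    (hD : IsContinuousPoset D) (hT : ∀ z δ, IsLowerSet {t | (z, t, δ) ∈ T})
    {x : A} {t : D} {α : L} :
    (x, t, α) ∈ lComp (· * ·) R (lComp (· * ·) Q T) ↔
      α ≤ wayBelowInf (supGrade R ⊚ supGrade Q ⊚ supGrade T) x t := by
  rw [mem_lComp_iff hL, supGrade_lComp hL, wayBelowInf_fuzzyComp_wayBelowInf_right hD _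
    (antitone_fuzzyComp _ (antitone_supGrade hT)), fuzzyComp_assoc]

end LComp

theorem stmt19_general {S₁ S₂ S₃ S₄ L : Type*} [PartialOrder S₃] [PartialOrder S₄]
    [CompleteLattice L] [Semigroup L] [IsQuantale L]
    (h₄ : IsContinuousPoset S₄) (hL : IsContinuousPoset L)
    (R : Set (S₁ × S₂ × L)) (Q : Set (S₂ × S₃ × L)) (T : Set (S₃ × S₄ × L))
    (hQ : ∀ y γ, IsLowerSet {z | (y, z, γ) ∈ Q}) (hT : ∀ z δ, IsLowerSet {t | (z, t, δ) ∈ T})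
    (hTpi : LPseudoInvertible T) :
    lComp (· * ·) (lComp (· * ·) R Q) T = lComp (· * ·) R (lComp (· * ·) Q T) ∧
    ∀ (x : S₁) (t : S₄) (α : L),
      (x, t, α) ∈ lComp (· * ·) (lComp (· * ·) R Q) T ↔
        (∀ α' : L, WayBelow α' α → ∀ t' : S₄, WayBelow t' t →
          ∃ (n : ℕ) (y : Fin n → S₂) (z : Fin n → S₃) (β γ δ : Fin n → L),
            (∀ i, (x, y i, β i) ∈ R ∧ (y i, z i, γ i) ∈ Q ∧ (z i, t', δ i) ∈ T) ∧
            α' ≤ ⨆ i, β i * γ i * δ i) := by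
  have mem_left {x t α} := mem_lComp_lComp_left_iff (R := R) (x := x) (t := t) (α := α)
    hL h₄ hQ hTpi
  refine ⟨?_, fun x t α => ?_⟩
  · ext ⟨x, t, α⟩
    rw [mem_left, mem_lComp_lComp_right_iff hL h₄ hT]
  · simp only [mem_left, wayBelowInf, le_iInf_iff, le_fuzzyComp_fuzzyComp_supGrade_iff hL]
    exact ⟨fun h α' hα' t' ht' => h t' ht' α' hα', fun h t' ht' α' hα' => h α' hα' t' ht'⟩

/-- The semigroup structure carried by a quantale multiplication. It turns the function `mul` into
the `*` over which Mathlib's `IsQuantale` is stated. -/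
abbrev IsQuantaleMul.toSemigroup {L : Type*} [CompleteLattice L] {mul : L → L → L}
    (h : IsQuantaleMul mul) : Semigroup L where
  mul := mul
  mul_assoc := h.1

theorem IsQuantaleMul.isQuantale {L : Type*} [CompleteLattice L] {mul : L → L → L}
    (h : IsQuantaleMul mul) : @IsQuantale L h.toSemigroup _ :=
  letI := h.toSemigroup
  { mul_sSup_distrib := h.2.2.1
    sSup_mul_distrib := h.2.1 }

/-- For pseudo-invertible `L`-ambiguous representations `R`, `Q`, `T`,
the composition `⊛` is associative, and membership of `(x,t,α)` in either side is
characterized by the existence of finite interpolating families. -/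
theorem stmt19 {S₁ S₂ S₃ S₄ L : Type*}
    [SemilatticeInf S₁] [OrderBot S₁] [SemilatticeInf S₂] [OrderBot S₂]
    [SemilatticeInf S₃] [OrderBot S₃] [SemilatticeInf S₄] [OrderBot S₄]
    [CompletelyDistribLattice L]
    (h₁ : IsContinuousSemilattice S₁) (h₂ : IsContinuousSemilattice S₂)
    (h₃ : IsContinuousSemilattice S₃) (h₄ : IsContinuousSemilattice S₄)
    (mul : L → L → L) (hmul : IsQuantaleMul mul)
    (R : Set (S₁ × S₂ × L)) (Q : Set (S₂ × S₃ × L)) (T : Set (S₃ × S₄ × L))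
    (hR : LAmbRep R) (hQ : LAmbRep Q) (hT : LAmbRep T)
    (hRpi : LPseudoInvertible R) (hQpi : LPseudoInvertible Q) (hTpi : LPseudoInvertible T) :
    lComp mul (lComp mul R Q) T = lComp mul R (lComp mul Q T) ∧
    ∀ (x : S₁) (t : S₄) (α : L),
      (x, t, α) ∈ lComp mul (lComp mul R Q) T ↔
        (∀ α' : L, WayBelow α' α → ∀ t' : S₄, WayBelow t' t →
          ∃ (n : ℕ) (y : Fin n → S₂) (z : Fin n → S₃) (β γ δ : Fin n → L),
            (∀ i, (x, y i, β i) ∈ R ∧ (y i, z i, γ i) ∈ Q ∧ (z i, t', δ i) ∈ T) ∧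
            α' ≤ ⨆ i, mul (mul (β i) (γ i)) (δ i)) := by
  let := hmul.toSemigroup
  have := hmul.isQuantale
  exact stmt19_general h₄.isContinuousPoset (isContinuousPoset_of_completelyDistribLattice L) R Q T
    (fun y γ => (hQ.2.1 y γ).2.1) (fun z δ => (hT.2.1 z δ).2.1) hTpi
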